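/- For any two point sets S and T in R^2 in general position with |S| = |T| = n, one can add at most n/2 + 3 Steiner points to each set so that the augmented sets admit compatible triangulations. -/

import Mathlib

noncomputable section
open scoped Classical

/-- The Euclidean plane. -/
abbrev Pt : Type := EuclideanSpace ℝ (Fin 2)

/-- `a`, `b`, `c` are in clockwise orientation (negative signed area). -/
def cwOriented (a b c : Pt) : Prop :=
  (b 0 - a 0) * (c 1 - a 1) - (b 1 - a 1) * (c 0 - a 0) < 0

/-- The vertex set of an (ordered) triangle. -/
def triPts (t : Pt × Pt × Pt) : Set Pt := {t.1, t.2.1, t.2.2}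

/-- The closed triangle spanned by an ordered triple. -/
def triHull (t : Pt × Pt × Pt) : Set Pt := convexHull ℝ (triPts t)

/-- The open triangle spanned by an ordered triple. -/
def triInt (t : Pt × Pt × Pt) : Set Pt := interior (triHull t)

/-- A set of points is in general position if no three of its points are collinear. -/
def GenPos (A : Set Pt) : Prop :=
  ∀ p ∈ A, ∀ q ∈ A, ∀ r ∈ A, p ≠ q → p ≠ r → q ≠ r → ¬ Collinear ℝ ({p, q, r} : Set Pt)

/-- A triangulation of a finite point set `S`: a family of empty triangles, with
vertices in `S` and normalized clockwise orientation, with pairwise disjoint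
interiors, covering the convex hull of `S`, and such that every point of `S`
meeting a triangle is one of its vertices (so all points of `S` are used and
triangles are empty). -/
structure Triangulation (S : Finset Pt) where
  faces : Finset (Pt × Pt × Pt)
  verts_mem : ∀ t ∈ faces, triPts t ⊆ (S : Set Pt)
  cw_face : ∀ t ∈ faces, cwOriented t.1 t.2.1 t.2.2
  empty_face : ∀ t ∈ faces, ∀ p ∈ S, p ∈ triHull t → p ∈ triPts t
  disj : ∀ t ∈ faces, ∀ t' ∈ faces, t ≠ t' → triInt t ∩ triInt t' = ∅
  cover : (⋃ t ∈ faces, triHull t) = convexHull ℝ (S : Set Pt)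

/-- `(a,b,c)` is a (clockwise) face of the triangulation, up to cyclic rotation. -/
def IsFace {S : Finset Pt} (T : Triangulation S) (a b c : Pt) : Prop :=
  (a, b, c) ∈ T.faces ∨ (b, c, a) ∈ T.faces ∨ (c, a, b) ∈ T.faces

/-- Compatibility of two triangulations via a prescribed bijection:
clockwise-oriented triangles correspond to clockwise-oriented triangles. -/
def CompatibleVia {S T' : Finset Pt} (TS : Triangulation S) (TT : Triangulation T')
    (f : Pt → Pt) : Prop :=
  Set.BijOn f (S : Set Pt) (T' : Set Pt) ∧
    ∀ a ∈ S, ∀ b ∈ S, ∀ c ∈ S, (IsFace TS a b c ↔ IsFace TT (f a) (f b) (f c))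

/-- Two triangulations are compatible if some bijection realizes the compatibility. -/
def Compatible {S T' : Finset Pt} (TS : Triangulation S) (TT : Triangulation T') : Prop :=
  ∃ f : Pt → Pt, CompatibleVia TS TT f

/-- The number of extreme points of `S` (points on the boundary of the convex hull). -/
def hullCount (S : Finset Pt) : ℕ :=
  (S.filter (fun p => p ∈ frontier (convexHull ℝ (S : Set Pt)))).card

/-!
Connecting a point in the interior of a triangular face with the three vertices of that face gives
a finer triangulation, and doing this in corresponding faces of two triangulations preserves their
compatibility. So it is enough to triangulate all `n`-point sets by the same sequence of such
insertions.

Choose a linear functional that is injective on the `n` given points, and place two Steiner points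
`U` and `D` far out in opposite directions on one of its level lines beyond all the points. Seen
from there the lines through `U` or `D` are almost parallel to the level lines, so each point `x`
spans with `U` and `D` a triangle that contains every point closer to the line `UD`. Starting from
the triangle of the outermost point and inserting the others from the outermost to the innermost,
each in the face spanned by `U`, `D` and its predecessor, gives a triangulation whose combinatorial
type depends only on `n`. Hence two Steiner points are enough, which is at most `n / 2 + 3`.
-/

open scoped Topology

section Orientation

variable {a b c : Pt}

/-- The orientation determinant of three points, which is twice the signed area of the triangle
they span; `cwOriented a b c` unfolds to `orient a b c < 0`. -/
def orient (a b c : Pt) : ℝ :=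
  (b 0 - a 0) * (c 1 - a 1) - (b 1 - a 1) * (c 0 - a 0)

lemma orient_rotate (a b c : Pt) : orient b c a = orient a b c := by
  simp only [orient]; ring

lemma orient_swap (a b c : Pt) : orient b a c = -orient a b c := by
  simp only [orient]; ring

lemma orient_self_left (a b : Pt) : orient a b a = 0 := by
  simp only [orient]; ring

lemma orient_self_right (a b : Pt) : orient a b b = 0 := by
  simp only [orient]; ring

lemma cwOriented_iff_orient_neg : cwOriented a b c ↔ orient a b c < 0 := Iff.rfl

lemma cwOriented.left_ne_middle (h : cwOriented a b c) : a ≠ b := by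
  rintro rfl
  simp [cwOriented] at h

lemma cwOriented.rotate (h : cwOriented a b c) : cwOriented b c a :=
  (orient_rotate a b c).trans_lt h

lemma orient_combo (a b x y : Pt) {s t : ℝ} (h : s + t = 1) :
    orient a b (s • x + t • y) = s * orient a b x + t * orient a b y := by
  obtain rfl : s = 1 - t := by linarith
  simp only [orient, PiLp.add_apply, PiLp.smul_apply, smul_eq_mul]
  ring

lemma orient_add_orient_add_orient (a b c x : Pt) :
    orient a b x + orient b c x + orient c a x = orient a b c := by
  simp only [orient]; ring

lemma orient_smul_add_orient_smul_add_orient_smul (a b c x : Pt) :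
    orient b c x • a + orient c a x • b + orient a b x • c = orient a b c • x := by
  ext i
  fin_cases i <;> simp [orient] <;> ring

lemma convex_setOf_orient_nonpos (a b : Pt) : Convex ℝ {x | orient a b x ≤ 0} := by
  intro x hx y hy s t hs ht hst
  rw [Set.mem_ofPred_eq, orient_combo a b x y hst]
  exact add_nonpos (mul_nonpos_of_nonneg_of_nonpos hs hx) (mul_nonpos_of_nonneg_of_nonpos ht hy)

lemma interior_setOf_orient_nonpos (h : cwOriented a b c) :
    interior {x | orient a b x ≤ 0} = {x | orient a b x < 0} := by
  have hcont : Continuous (orient a b) := by unfold orient; fun_prop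
  refine subset_antisymm (fun x hx => ?_)
    (interior_maximal (fun x (hx : orient a b x < 0) => hx.le) (isOpen_Iio.preimage hcont))
  have hle : orient a b x ≤ 0 := (interior_subset hx :)
  refine lt_of_le_of_ne hle fun hx0 => ?_
  -- Moving away from `c`, a point of the boundary line leaves the half-plane.
  have hpath : Continuous fun s : ℝ => (1 - s) • x + s • c := by fun_prop
  have hnear : ∀ᶠ s : ℝ in 𝓝[<] 0, (1 - s) • x + s • c ∈ interior {x | orient a b x ≤ 0} :=
    nhdsWithin_le_nhds (hpath.continuousAt (isOpen_interior.mem_nhds (by simpa using hx)))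
  obtain ⟨s, hmem, hs⟩ := (hnear.and self_mem_nhdsWithin).exists
  have hle : orient a b ((1 - s) • x + s • c) ≤ 0 := (interior_subset hmem :)
  rw [orient_combo a b x c (sub_add_cancel 1 s), hx0, mul_zero, zero_add] at hle
  exact hle.not_gt (mul_pos_of_neg_of_neg hs h)

end Orientation

section Triangle

variable {a b c x : Pt} {t : Pt × Pt × Pt}

lemma left_mem_triPts (a b c : Pt) : a ∈ triPts (a, b, c) := by simp [triPts]

lemma middle_mem_triPts (a b c : Pt) : b ∈ triPts (a, b, c) := by simp [triPts]

lemma right_mem_triPts (a b c : Pt) : c ∈ triPts (a, b, c) := by simp [triPts]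

lemma convex_triHull (t : Pt × Pt × Pt) : Convex ℝ (triHull t) := convex_convexHull ℝ _

lemma triPts_subset_triHull (t : Pt × Pt × Pt) : triPts t ⊆ triHull t := subset_convexHull ℝ _

lemma triHull_rotate (a b c : Pt) : triHull (b, c, a) = triHull (a, b, c) := by
  unfold triHull triPts
  congr 1
  grind

lemma triHull_subset_setOf_orient_nonpos (h : cwOriented a b c) :
    triHull (a, b, c) ⊆ {x | orient a b x ≤ 0} := by
  refine convexHull_min ?_ (convex_setOf_orient_nonpos a b)
  rintro x (rfl | rfl | rfl)
  · exact (orient_self_left _ _).le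
  · exact (orient_self_right _ _).le
  · exact le_of_lt h

lemma mem_triHull_of_orient_nonpos (h : cwOriented a b c) (hab : orient a b x ≤ 0)
    (hbc : orient b c x ≤ 0) (hca : orient c a x ≤ 0) : x ∈ triHull (a, b, c) := by
  have habc : orient a b c < 0 := h
  have hweight {r : ℝ} (hr : r ≤ 0) : 0 ≤ r / orient a b c := div_nonneg_of_nonpos hr habc.le
  have hsum : orient b c x / orient a b c + orient c a x / orient a b c +
      orient a b x / orient a b c = 1 := by
    rw [← add_div, ← add_div, div_eq_one_iff_eq habc.ne, ← orient_add_orient_add_orient a b c x]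
    ring
  have hbary : (orient b c x / orient a b c) • a + (orient c a x / orient a b c) • b +
      (orient a b x / orient a b c) • c = x :=
    calc
      _ = (orient a b c)⁻¹ • (orient b c x • a + orient c a x • b + orient a b x • c) := by
        simp only [smul_add, smul_smul, div_eq_inv_mul]
      _ = x := by
        rw [orient_smul_add_orient_smul_add_orient_smul, inv_smul_smul₀ habc.ne]
  have hvert := triPts_subset_triHull (a, b, c)
  have hcombo := (convex_triHull (a, b, c)).sum_mem (t := Finset.univ)
    (w := ![orient b c x / orient a b c, orient c a x / orient a b c, orient a b x / orient a b c])
    (z := ![a, b, c])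
    (by simpa [Fin.forall_fin_succ] using ⟨hweight hbc, hweight hca, hweight hab⟩)
    (by simpa [Fin.sum_univ_three] using hsum)
    (by simpa [Fin.forall_fin_succ] using ⟨hvert (left_mem_triPts a b c),
      hvert (middle_mem_triPts a b c), hvert (right_mem_triPts a b c)⟩)
  rw [← hbary]
  simpa [Fin.sum_univ_three] using hcombo

lemma mem_triHull_iff (h : cwOriented a b c) :
    x ∈ triHull (a, b, c) ↔ orient a b x ≤ 0 ∧ orient b c x ≤ 0 ∧ orient c a x ≤ 0 := by
  refine ⟨fun hx => ⟨?_, ?_, ?_⟩, fun ⟨hab, hbc, hca⟩ => mem_triHull_of_orient_nonpos h hab hbc hca⟩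
  · exact triHull_subset_setOf_orient_nonpos h hx
  · rw [← triHull_rotate] at hx
    exact triHull_subset_setOf_orient_nonpos h.rotate hx
  · rw [← triHull_rotate, ← triHull_rotate] at hx
    exact triHull_subset_setOf_orient_nonpos h.rotate.rotate hx

lemma mem_triInt_iff (h : cwOriented a b c) :
    x ∈ triInt (a, b, c) ↔ cwOriented a b x ∧ cwOriented b c x ∧ cwOriented c a x := by
  have hhull : triHull (a, b, c) =
      {x | orient a b x ≤ 0} ∩ ({x | orient b c x ≤ 0} ∩ {x | orient c a x ≤ 0}) :=
    Set.ext fun _ => mem_triHull_iff h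
  rw [triInt, hhull, interior_inter, interior_inter, interior_setOf_orient_nonpos h,
    interior_setOf_orient_nonpos h.rotate, interior_setOf_orient_nonpos h.rotate.rotate]
  rfl

lemma triInt_nonempty (h : cwOriented a b c) : (triInt (a, b, c)).Nonempty := by
  refine ⟨(1 / 3 : ℝ) • (a + b + c), (mem_triInt_iff h).2 ⟨?_, ?_, ?_⟩⟩ <;>
  · simp only [cwOriented, PiLp.add_apply, PiLp.smul_apply, smul_eq_mul] at h ⊢
    linarith

lemma disjoint_triInt_triHull {s : Pt × Pt × Pt} (hs : cwOriented s.1 s.2.1 s.2.2)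
    (hdisj : triInt t ∩ triInt s = ∅) : Disjoint (triInt t) (triHull s) := by
  have hclosure : triHull s ⊆ closure (triInt s) := by
    rw [triInt, (convex_triHull s).closure_interior_eq_closure_of_nonempty_interior
      (triInt_nonempty hs)]
    exact subset_closure
  exact ((Set.disjoint_iff_inter_eq_empty.2 hdisj).closure_right isOpen_interior).mono_right
    hclosure

end Triangle

section StellarSubdivision

/-- The three triples joining the sides of `t` to `q`: the triangles into which `t` is cut when the
interior point `q` is connected to its vertices. -/
def starFaces {α : Type*} [DecidableEq α] (t : α × α × α) (q : α) : Finset (α × α × α) :=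
  {(t.1, t.2.1, q), (t.2.1, t.2.2, q), (t.2.2, t.1, q)}

lemma mem_starFaces {α : Type*} [DecidableEq α] {t s : α × α × α} {q : α} :
    s ∈ starFaces t q ↔
    s = (t.1, t.2.1, q) ∨ s = (t.2.1, t.2.2, q) ∨ s = (t.2.2, t.1, q) := by
  simp [starFaces]

variable {a b c q x : Pt} {t s : Pt × Pt × Pt}

lemma cwOriented_of_mem_starFaces (ht : cwOriented t.1 t.2.1 t.2.2) (hq : q ∈ triInt t)
    (hs : s ∈ starFaces t q) : cwOriented s.1 s.2.1 s.2.2 := by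
  obtain ⟨hab, hbc, hca⟩ := (mem_triInt_iff ht).1 hq
  obtain rfl | rfl | rfl := mem_starFaces.1 hs <;> assumption

lemma triPts_subset_of_mem_starFaces (hs : s ∈ starFaces t q) :
    triPts s ⊆ insert q (triPts t) := by
  obtain rfl | rfl | rfl := mem_starFaces.1 hs <;> simp [triPts, Set.insert_subset_iff]

lemma mem_triPts_of_mem_starFaces (hs : s ∈ starFaces t q) : q ∈ triPts s := by
  obtain rfl | rfl | rfl := mem_starFaces.1 hs <;> exact right_mem_triPts _ _ _

lemma triHull_subset_of_mem_starFaces (hq : q ∈ triInt t) (hs : s ∈ starFaces t q) :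
    triHull s ⊆ triHull t :=
  convexHull_min ((triPts_subset_of_mem_starFaces hs).trans
    (Set.insert_subset (interior_subset hq) (triPts_subset_triHull t))) (convex_triHull t)

-- The line through the common side separates adjacent triangles.
lemma disjoint_triInt_of_common_side (h : cwOriented a b q) (h' : cwOriented b c q) :
    Disjoint (triInt (a, b, q)) (triInt (b, c, q)) := by
  refine Set.disjoint_left.2 fun x hx hx' => ?_
  have hlt : orient b q x < 0 := ((mem_triInt_iff h).1 hx).2.1
  have hgt : orient q b x < 0 := ((mem_triInt_iff h').1 hx').2.2
  rw [orient_swap] at hgt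
  linarith

lemma pairwiseDisjoint_triInt_starFaces (ht : cwOriented t.1 t.2.1 t.2.2) (hq : q ∈ triInt t) :
    (starFaces t q : Set (Pt × Pt × Pt)).PairwiseDisjoint triInt := by
  obtain ⟨hab, hbc, hca⟩ := (mem_triInt_iff ht).1 hq
  have habc := disjoint_triInt_of_common_side hab hbc
  have hbca := disjoint_triInt_of_common_side hbc hca
  have hcab := disjoint_triInt_of_common_side hca hab
  intro s hs s' hs' hne
  obtain rfl | rfl | rfl := mem_starFaces.1 hs <;> obtain rfl | rfl | rfl := mem_starFaces.1 hs' <;>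
    first | exact absurd rfl hne | assumption | (apply Disjoint.symm; assumption)

lemma iUnion_triHull_starFaces (ht : cwOriented t.1 t.2.1 t.2.2) (hq : q ∈ triInt t) :
    ⋃ s ∈ starFaces t q, triHull s = triHull t := by
  refine (Set.iUnion₂_subset fun s => triHull_subset_of_mem_starFaces hq).antisymm fun x hx => ?_
  obtain ⟨a, b, c⟩ := t
  obtain ⟨hab, hbc, hca⟩ := (mem_triInt_iff ht).1 hq
  obtain ⟨xab, xbc, xca⟩ := (mem_triHull_iff ht).1 hx
  simp only [starFaces, Set.mem_iUnion₂, exists_prop, Finset.mem_insert, Finset.mem_singleton,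
    exists_eq_or_imp, exists_eq_left, mem_triHull_iff hab, mem_triHull_iff hbc,
    mem_triHull_iff hca, orient_swap q, neg_nonpos]
  -- As `q` is a positive combination of `a`, `b`, `c`, the three signed areas cannot all be
  -- positive or all be negative, so `x` lies in one of the three sectors at `q`.
  have hbalance : orient b c q * orient q a x + orient c a q * orient q b x +
      orient a b q * orient q c x = 0 := by
    simp only [orient]; ring
  rw [cwOriented_iff_orient_neg] at hab hbc hca
  by_contra! h
  obtain ⟨hb, hc, ha⟩ : (0 ≤ orient q b x → 0 < orient q a x) ∧
      (0 ≤ orient q c x → 0 < orient q b x) ∧ (0 ≤ orient q a x → 0 < orient q c x) :=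
    ⟨h.1 xab, h.2.1 xbc, h.2.2 xca⟩
  rcases le_or_gt 0 (orient q a x) with hqa | hqa
  · have hqc := ha hqa
    have hqb := hc hqc.le
    linarith [mul_neg_of_neg_of_pos hbc (hb hqb.le), mul_neg_of_neg_of_pos hca hqb,
      mul_neg_of_neg_of_pos hab hqc]
  · have hqb : orient q b x < 0 := not_le.1 fun hqb => hqa.not_gt (hb hqb)
    have hqc : orient q c x < 0 := not_le.1 fun hqc => hqb.not_gt (hc hqc)
    linarith [mul_pos_of_neg_of_neg hbc hqa, mul_pos_of_neg_of_neg hca hqb,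
      mul_pos_of_neg_of_neg hab hqc]

lemma notMem_triHull_of_common_side (h : cwOriented a b q) (h' : cwOriented b c q) :
    c ∉ triHull (a, b, q) := by
  intro hc
  have hle : orient b q c ≤ 0 := ((mem_triHull_iff h).1 hc).2.1
  have hlt : orient b c q < 0 := h'
  rw [← orient_rotate, orient_swap, orient_rotate] at hle
  linarith

lemma mem_triPts_of_mem_triHull_starFaces (ht : cwOriented t.1 t.2.1 t.2.2) (hq : q ∈ triInt t)
    (hs : s ∈ starFaces t q) (hx : x ∈ triPts t) (hxs : x ∈ triHull s) : x ∈ triPts s := by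
  obtain ⟨hab, hbc, hca⟩ := (mem_triInt_iff ht).1 hq
  have hc := notMem_triHull_of_common_side hab hbc
  have ha := notMem_triHull_of_common_side hbc hca
  have hb := notMem_triHull_of_common_side hca hab
  obtain rfl | rfl | rfl := mem_starFaces.1 hs <;> obtain rfl | rfl | rfl := hx <;>
    first | exact absurd hxs ‹_› | exact left_mem_triPts _ _ _ | exact middle_mem_triPts _ _ _

end StellarSubdivision

namespace Triangulation

variable {S : Finset Pt} {q : Pt} {t : Pt × Pt × Pt}

lemma triHull_subset_convexHull (T : Triangulation S) (ht : t ∈ T.faces) :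
    triHull t ⊆ convexHull ℝ (S : Set Pt) :=
  convexHull_mono (T.verts_mem t ht)

lemma notMem_of_mem_triInt (T : Triangulation S) (ht : t ∈ T.faces) (hq : q ∈ triInt t) :
    q ∉ S := by
  intro hqS
  obtain ⟨hab, hbc, hca⟩ := (mem_triInt_iff (T.cw_face t ht)).1 hq
  rw [cwOriented_iff_orient_neg] at hab hbc hca
  obtain rfl | rfl | rfl := T.empty_face t ht q hqS (interior_subset hq)
  · exact hab.ne (orient_self_left _ _)
  · exact hbc.ne (orient_self_left _ _)
  · exact hca.ne (orient_self_left _ _)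

/-- The stellar subdivision of a triangulation at a point `q` interior to one of its faces `t`:
`q` becomes a vertex and is connected to the three vertices of `t`. -/
def star (T : Triangulation S) (ht : t ∈ T.faces) (hq : q ∈ triInt t) :
    Triangulation (insert q S) where
  faces := T.faces.erase t ∪ starFaces t q
  verts_mem s hs := by
    rw [Finset.coe_insert]
    obtain hs | hs := Finset.mem_union.1 hs
    · exact (T.verts_mem s (Finset.mem_of_mem_erase hs)).trans (Set.subset_insert _ _)
    · exact (triPts_subset_of_mem_starFaces hs).trans (Set.insert_subset_insert (T.verts_mem t ht))
  cw_face s hs := by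
    obtain hs | hs := Finset.mem_union.1 hs
    · exact T.cw_face s (Finset.mem_of_mem_erase hs)
    · exact cwOriented_of_mem_starFaces (T.cw_face t ht) hq hs
  empty_face s hs x hx hxs := by
    obtain hs | hs := Finset.mem_union.1 hs <;> obtain hxq | hx := Finset.mem_insert.1 hx
    · obtain ⟨hne, hs⟩ := Finset.mem_erase.1 hs
      have hdisj := disjoint_triInt_triHull (T.cw_face s hs) (T.disj t ht s hs hne.symm)
      exact absurd hxs (hdisj.notMem_of_mem_left (hxq ▸ hq))
    · exact T.empty_face s (Finset.mem_of_mem_erase hs) x hx hxs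
    · exact hxq ▸ mem_triPts_of_mem_starFaces hs
    · have hxt := T.empty_face t ht x hx (triHull_subset_of_mem_starFaces hq hs hxs)
      exact mem_triPts_of_mem_triHull_starFaces (T.cw_face t ht) hq hs hxt hxs
  disj s hs s' hs' hne := by
    have hcross {u u'} (hu : u ∈ T.faces.erase t) (hu' : u' ∈ starFaces t q) :
        Disjoint (triInt u) (triInt u') := by
      obtain ⟨hut, hu⟩ := Finset.mem_erase.1 hu
      exact (Set.disjoint_iff_inter_eq_empty.2 (T.disj u hu t ht hut)).mono_right
        (interior_mono (triHull_subset_of_mem_starFaces hq hu'))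
    obtain hs | hs := Finset.mem_union.1 hs <;> obtain hs' | hs' := Finset.mem_union.1 hs'
    · exact T.disj s (Finset.mem_of_mem_erase hs) s' (Finset.mem_of_mem_erase hs') hne
    · exact (hcross hs hs').inter_eq
    · exact (hcross hs' hs).symm.inter_eq
    · exact (pairwiseDisjoint_triInt_starFaces (T.cw_face t ht) hq hs hs' hne).inter_eq
  cover := by
    have hqS : q ∈ convexHull ℝ (S : Set Pt) :=
      T.triHull_subset_convexHull ht (interior_subset hq)
    calc
      _ = (⋃ s ∈ T.faces.erase t, triHull s) ∪ triHull t := by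
        rw [Finset.set_biUnion_union, iUnion_triHull_starFaces (T.cw_face t ht) hq]
      _ = ⋃ s ∈ T.faces, triHull s := by
        rw [Set.union_comm, ← Finset.set_biUnion_insert, Finset.insert_erase ht]
      _ = convexHull ℝ (S : Set Pt) := T.cover
      _ = convexHull ℝ ((insert q S : Finset Pt) : Set Pt) := by
        rw [Finset.coe_insert]
        exact (convexHull_mono (Set.subset_insert _ _)).antisymm
          (convexHull_min (Set.insert_subset hqS (subset_convexHull ℝ _)) (convex_convexHull ℝ _))

/-- The triangulation of the vertices of a single triangle. -/
def ofTriangle {a b c : Pt} (h : cwOriented a b c) : Triangulation {c, a, b} where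
  faces := {(a, b, c)}
  verts_mem s hs := by
    obtain rfl := Finset.mem_singleton.1 hs
    simp [triPts, Set.insert_subset_iff]
  cw_face s hs := by
    obtain rfl := Finset.mem_singleton.1 hs
    exact h
  empty_face s hs x hx _ := by
    obtain rfl := Finset.mem_singleton.1 hs
    simp only [triPts, Finset.mem_insert, Finset.mem_singleton] at hx ⊢
    tauto
  disj s hs s' hs' hne := by
    obtain rfl := Finset.mem_singleton.1 hs
    exact absurd (Finset.mem_singleton.1 hs').symm hne
  cover := by
    rw [Finset.set_biUnion_singleton, ← triHull_rotate, ← triHull_rotate]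
    simp [triHull, triPts]

/-- The triangulation without faces of the empty point set. -/
def empty : Triangulation ∅ where
  faces := ∅
  verts_mem := by simp
  cw_face := by simp
  empty_face := by simp
  disj := by simp
  cover := by simp

end Triangulation

section FaceIso

/-- The map of ordered triples induced by a map of points. -/
def mapTriple {α β : Type*} (f : α → β) (t : α × α × α) : β × β × β := (f t.1, f t.2.1, f t.2.2)

lemma image_starFaces {α β : Type*} [DecidableEq α] [DecidableEq β] (f : α → β) (t : α × α × α)
    (q : α) :
    (starFaces t q).image (mapTriple f) = starFaces (mapTriple f t) (f q) := by
  simp [starFaces, mapTriple, Finset.image_insert]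

variable {S T : Finset Pt} {f : Pt → Pt} {TS : Triangulation S} {TT : Triangulation T}
  {t : Pt × Pt × Pt} {q q' : Pt}

/-- A bijection of the vertex sets that carries the ordered faces of one triangulation exactly to
those of the other. -/
structure FaceIso (f : Pt → Pt) (TS : Triangulation S) (TT : Triangulation T) : Prop where
  bijOn : Set.BijOn f S T
  image_faces : TS.faces.image (mapTriple f) = TT.faces

lemma mapTriple_injOn {α β : Type*} {f : α → β} {s : Set α} (hf : Set.InjOn f s) :
    Set.InjOn (mapTriple f) (s ×ˢ s ×ˢ s) :=
  hf.prodMap (hf.prodMap hf)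

lemma Triangulation.faces_subset (T : Triangulation S) :
    (T.faces : Set (Pt × Pt × Pt)) ⊆ (S : Set Pt) ×ˢ (S : Set Pt) ×ˢ (S : Set Pt) := fun t ht =>
  ⟨T.verts_mem t ht (left_mem_triPts _ _ _), T.verts_mem t ht (middle_mem_triPts _ _ _),
    T.verts_mem t ht (right_mem_triPts _ _ _)⟩

namespace FaceIso

lemma compatible (h : FaceIso f TS TT) : Compatible TS TT := by
  have hmem {a b c : Pt} (ha : a ∈ S) (hb : b ∈ S) (hc : c ∈ S) :
      (a, b, c) ∈ TS.faces ↔ (f a, f b, f c) ∈ TT.faces := by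
    rw [← h.image_faces, ← Finset.mem_coe, ← Finset.mem_coe, Finset.coe_image]
    exact ((mapTriple_injOn h.bijOn.injOn).mem_image_iff TS.faces_subset ⟨ha, hb, hc⟩).symm
  refine ⟨f, h.bijOn, fun a ha b hb c hc => ?_⟩
  rw [IsFace, IsFace, hmem ha hb hc, hmem hb hc ha, hmem hc ha hb]

lemma mapTriple_mem_faces (h : FaceIso f TS TT) (ht : t ∈ TS.faces) : mapTriple f t ∈ TT.faces :=
  h.image_faces ▸ Finset.mem_image_of_mem _ ht

lemma star (h : FaceIso f TS TT) (ht : t ∈ TS.faces) (hq : q ∈ triInt t)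
    (hq' : q' ∈ triInt (mapTriple f t)) :
    FaceIso (Function.update f q q') (TS.star ht hq) (TT.star (h.mapTriple_mem_faces ht) hq') := by
  have hqS : q ∉ S := TS.notMem_of_mem_triInt ht hq
  have hqT : q' ∉ T := TT.notMem_of_mem_triInt (h.mapTriple_mem_faces ht) hq'
  have heq : Set.EqOn f (Function.update f q q') S := fun x hx =>
    (Function.update_of_ne (ne_of_mem_of_not_mem hx hqS) _ _).symm
  have heq_faces : Set.EqOn (mapTriple f) (mapTriple (Function.update f q q')) TS.faces :=
    fun s hs => by
      obtain ⟨h₁, h₂, h₃⟩ := TS.faces_subset hs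
      simp only [mapTriple, heq h₁, heq h₂, heq h₃]
  have hinj : Set.InjOn (mapTriple f) TS.faces :=
    (mapTriple_injOn h.bijOn.injOn).mono TS.faces_subset
  constructor
  · rw [Finset.coe_insert, Finset.coe_insert]
    simpa using (h.bijOn.congr heq).insert (a := q) (by simpa using hqT)
  · change (TS.faces.erase t ∪ starFaces t q).image _ = TT.faces.erase _ ∪ starFaces _ q'
    rw [Finset.image_union, image_starFaces, ← heq_faces ht, Function.update_self,
      Finset.erase_eq, Finset.erase_eq, ← h.image_faces, ← Finset.image_singleton,
      ← Finset.image_sdiff_of_injOn hinj (Finset.singleton_subset_iff.2 ht)]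
    congr 1
    exact Finset.image_congr fun s hs => (heq_faces (Finset.sdiff_subset hs)).symm

end FaceIso

lemma compatible_empty : Compatible Triangulation.empty Triangulation.empty :=
  ⟨id, by simp, by simp⟩

lemma exists_faceIso_ofTriangle {a b c a' b' c' : Pt} (h : cwOriented a b c)
    (h' : cwOriented a' b' c') :
    ∃ f, FaceIso f (Triangulation.ofTriangle h) (Triangulation.ofTriangle h') ∧
      mapTriple f (a, b, c) = (a', b', c') := by
  have hca := h.rotate.rotate.left_ne_middle
  have hbc := h.rotate.left_ne_middle
  have hca' := h'.rotate.rotate.left_ne_middle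
  have hbc' := h'.rotate.left_ne_middle
  let f : Pt → Pt := fun x => if x = a then a' else if x = b then b' else c'
  have hfa : f a = a' := if_pos rfl
  have hfb : f b = b' := by simp [f, h.left_ne_middle.symm]
  have hfc : f c = c' := by simp [f, hca, hbc.symm]
  have hf : mapTriple f (a, b, c) = (a', b', c') := by simp only [mapTriple, hfa, hfb, hfc]
  have hbij : Set.BijOn f {c, a, b} {f c, f a, f b} := by
    refine ((Set.bijOn_singleton.2 rfl).insert ?_).insert ?_
    · simpa [hfa, hfb] using h'.left_ne_middle
    · simpa [hfa, hfb, hfc] using ⟨hca', hbc'.symm⟩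
  refine ⟨f, ⟨?_, ?_⟩, hf⟩
  · simpa [hfa, hfb, hfc] using hbij
  · simp [Triangulation.ofTriangle, hf]

end FaceIso

section Nested

/-- The points of `l`, listed from the innermost to the outermost, form clockwise triangles with
the side `UD`, and each lies inside the triangle of its successor. -/
structure IsNested (U D : Pt) (l : List Pt) : Prop where
  cw : ∀ x ∈ l, cwOriented U D x
  isChain : l.IsChain fun y x => y ∈ triInt (U, D, x)

/-- The vertex set consisting of `U`, `D` and the points of `l`, as built by successively inserting
the points of `l`. -/
def nestedVerts (U D : Pt) (l : List Pt) : Finset Pt := l.foldr insert {U, D}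

lemma nestedVerts_eq (U D : Pt) (l : List Pt) : nestedVerts U D l = l.toFinset ∪ {U, D} := by
  induction l with
  | nil => simp [nestedVerts]
  | cons x l ih => rw [List.toFinset_cons, Finset.insert_union, ← ih]; rfl

lemma subset_nestedVerts (U D : Pt) (l : List Pt) : l.toFinset ⊆ nestedVerts U D l :=
  nestedVerts_eq U D l ▸ Finset.subset_union_left

lemma card_nestedVerts_le (U D : Pt) (l : List Pt) :
    (nestedVerts U D l).card ≤ l.toFinset.card + 2 := by
  rw [nestedVerts_eq]
  exact (Finset.card_union_le _ _).trans (by gcongr; exact Finset.card_le_two)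

-- Each point of the list subdivides the face that its successor spans with `U` and `D`.
theorem exists_faceIso_of_isNested {U D U' D' : Pt} {l l' : List Pt} {x x' : Pt}
    (hlen : l.length = l'.length) (h : IsNested U D (x :: l)) (h' : IsNested U' D' (x' :: l')) :
    ∃ (TS : Triangulation (nestedVerts U D (x :: l)))
      (TT : Triangulation (nestedVerts U' D' (x' :: l'))) (f : Pt → Pt), FaceIso f TS TT ∧
        (U, D, x) ∈ TS.faces ∧ mapTriple f (U, D, x) = (U', D', x') := by
  induction l generalizing x x' l' with
  | nil =>
    obtain rfl := List.length_eq_zero_iff.1 hlen.symm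
    obtain ⟨f, hf, hfx⟩ :=
      exists_faceIso_ofTriangle (h.cw x List.mem_cons_self) (h'.cw x' List.mem_cons_self)
    exact ⟨_, _, f, hf, Finset.mem_singleton_self _, hfx⟩
  | cons y l ih =>
    obtain ⟨y', l', rfl⟩ := List.exists_cons_of_length_eq_add_one hlen.symm
    obtain ⟨hx, hchain⟩ := List.isChain_cons_cons.1 h.isChain
    obtain ⟨hx', hchain'⟩ := List.isChain_cons_cons.1 h'.isChain
    obtain ⟨TS, TT, f, hf, hy, hfy⟩ := ih (by simpa using hlen)
      ⟨fun z hz => h.cw z (List.mem_cons_of_mem _ hz), hchain⟩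
      ⟨fun z hz => h'.cw z (List.mem_cons_of_mem _ hz), hchain'⟩
    have hxS := TS.notMem_of_mem_triInt hy hx
    have hU : U ≠ x := ne_of_mem_of_not_mem (TS.verts_mem _ hy (left_mem_triPts _ _ _)) hxS
    have hD : D ≠ x := ne_of_mem_of_not_mem (TS.verts_mem _ hy (middle_mem_triPts _ _ _)) hxS
    refine ⟨_, _, _, hf.star hy hx (q' := x') (by rwa [hfy]),
      Finset.mem_union_right _ (mem_starFaces.2 (.inl rfl)), ?_⟩
    simp only [mapTriple, Prod.mk.injEq] at hfy ⊢
    exact ⟨(Function.update_of_ne hU _ _).trans hfy.1, (Function.update_of_ne hD _ _).trans hfy.2.1,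
      Function.update_self _ _ _⟩

end Nested

section FarApexes

lemma exists_list_pairwise_gt {α β : Type*} [DecidableEq α] [LinearOrder β] (A : Finset α)
    {f : α → β} (hf : Set.InjOn f A) :
    ∃ l : List α, l.Pairwise (fun y x => f x < f y) ∧ l.toFinset = A ∧ l.length = A.card := by
  let l := A.toList.insertionSort (Order.Preimage f (· ≥ ·))
  have hperm : l.Perm A.toList := List.perm_insertionSort _ _
  have hmem {x : α} (hx : x ∈ l) : x ∈ A := Finset.mem_toList.1 (hperm.mem_iff.1 hx)
  have hle : l.Pairwise fun y x => f x ≤ f y :=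
    List.pairwise_insertionSort (Order.Preimage f (· ≥ ·)) _
  have hne : l.Pairwise (· ≠ ·) := hperm.nodup_iff.2 A.nodup_toList
  refine ⟨l, ?_, ?_, ?_⟩
  · refine (hle.and hne).imp_of_mem fun hy hx h => ?_
    exact h.1.lt_of_ne fun heq => h.2 (hf (hmem hy) (hmem hx) heq.symm)
  · rw [List.toFinset_eq_of_perm _ _ hperm, Finset.toList_toFinset]
  · rw [hperm.length_eq, Finset.length_toList]

lemma exists_injOn_add_mul (A : Finset Pt) :
    ∃ e : ℝ, Set.InjOn (fun x : Pt => x 0 + e * x 1) A := by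
  obtain ⟨e, he⟩ := Infinite.exists_notMem_finset
    ((A ×ˢ A).image fun z => -(z.1 0 - z.2 0) / (z.1 1 - z.2 1))
  refine ⟨e, fun x hx y hy (hxy : x 0 + e * x 1 = y 0 + e * y 1) => ?_⟩
  have h1 : x 1 = y 1 := by
    by_contra h1
    refine he (Finset.mem_image.2 ⟨(x, y), Finset.mk_mem_product hx hy, ?_⟩)
    rw [div_eq_iff (sub_ne_zero.2 h1)]
    linarith
  have h0 : x 0 = y 0 := by simpa [h1] using hxy
  ext i
  fin_cases i <;> assumption

lemma exists_apexes (A : Finset Pt) (e : ℝ) : ∃ U D : Pt, (∀ x ∈ A, cwOriented U D x) ∧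
    ∀ x ∈ A, ∀ y ∈ A, x 0 + e * x 1 < y 0 + e * y 1 → y ∈ triInt (U, D, x) := by
  obtain ⟨c, hc⟩ : ∃ c : ℝ, ∀ x ∈ A, x 0 + e * x 1 < c :=
    ((Filter.eventually_all_finset A).2 fun x _ => Filter.eventually_gt_atTop _).exists
  have hlarge : ∀ᶠ M : ℝ in Filter.atTop, ∀ x ∈ A, ∀ y ∈ A, x 0 + e * x 1 < y 0 + e * y 1 →
      |(x 0 - c) * y 1 - x 1 * (y 0 - c)| < M * (y 0 + e * y 1 - (x 0 + e * x 1)) := by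
    simp only [Filter.eventually_all_finset, Filter.eventually_imp_distrib_left]
    exact fun x _ y _ hxy =>
      (Filter.tendsto_id.atTop_mul_const (sub_pos.2 hxy)).eventually_gt_atTop _
  obtain ⟨M, hM, hM0⟩ := (hlarge.and (Filter.eventually_gt_atTop 0)).exists
  -- The apexes lie far out in opposite directions on the line `x 0 + e * x 1 = c`.
  have hcw : ∀ x ∈ A, cwOriented !₂[c - e * M, M] !₂[c + e * M, -M] x := by
    intro x hx
    have hpos := mul_pos hM0 (sub_pos.2 (hc x hx))
    simp only [cwOriented, Matrix.cons_val_zero, Matrix.cons_val_one, Matrix.cons_val_fin_one]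
    linarith
  refine ⟨_, _, hcw, fun x hx y hy hxy => (mem_triInt_iff (hcw x hx)).2 ⟨hcw y hy, ?_, ?_⟩⟩ <;>
  · have habs := abs_lt.1 (hM x hx y hy hxy)
    simp only [cwOriented, Matrix.cons_val_zero, Matrix.cons_val_one, Matrix.cons_val_fin_one]
    linarith

lemma exists_isNested (A : Finset Pt) :
    ∃ (U D : Pt) (l : List Pt), IsNested U D l ∧ l.toFinset = A ∧ l.length = A.card := by
  obtain ⟨e, he⟩ := exists_injOn_add_mul A
  obtain ⟨U, D, hcw, hint⟩ := exists_apexes A e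
  obtain ⟨l, hsorted, hlA, hlen⟩ := exists_list_pairwise_gt A he
  have hmem {x : Pt} (hx : x ∈ l) : x ∈ A := hlA ▸ List.mem_toFinset.2 hx
  exact ⟨U, D, l, ⟨fun x hx => hcw x (hmem hx),
    (hsorted.imp_of_mem fun hy hx => hint _ (hmem hx) _ (hmem hy)).isChain⟩, hlA, hlen⟩

end FarApexes

theorem compatible_with_half_n_steiner_points_general (S T : Finset Pt) (hST : S.card = T.card) :
    ∃ S' T' : Finset Pt, S ⊆ S' ∧ T ⊆ T' ∧ S'.card ≤ S.card + 2 ∧ T'.card ≤ T.card + 2 ∧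
      ∃ (TS : Triangulation S') (TT : Triangulation T'), Compatible TS TT := by
  obtain ⟨U, D, l, hl, rfl, hlS⟩ := exists_isNested S
  obtain ⟨U', D', l', hl', rfl, hlT⟩ := exists_isNested T
  have hlen : l.length = l'.length := by rw [hlS, hST, hlT]
  match l, l', hlen with
  | [], [], _ =>
    exact ⟨∅, ∅, by simp, by simp, by simp, by simp, .empty, .empty, compatible_empty⟩
  | x :: l, x' :: l', hlen =>
    obtain ⟨TS, TT, f, hf, -⟩ := exists_faceIso_of_isNested (Nat.succ.inj hlen) hl hl'
    exact ⟨_, _, subset_nestedVerts U D _, subset_nestedVerts U' D' _, card_nestedVerts_le U D _,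
      card_nestedVerts_le U' D' _, TS, TT, hf.compatible⟩

/-- Theorem 4.1: any two `n`-point sets in general position can be compatibly
triangulated after adding at most `n/2 + 3` Steiner points to each set
(stated as `2 · #Steiner ≤ n + 6`). -/
theorem compatible_with_half_n_steiner_points (S T : Finset Pt) (n : ℕ)
    (hS : S.card = n) (hT : T.card = n)
    (hgenS : GenPos (S : Set Pt)) (hgenT : GenPos (T : Set Pt)) :
    ∃ S' T' : Finset Pt, S ⊆ S' ∧ T ⊆ T' ∧
      2 * (S'.card - S.card) ≤ n + 6 ∧ 2 * (T'.card - T.card) ≤ n + 6 ∧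
      ∃ (TS : Triangulation S') (TT : Triangulation T'), Compatible TS TT := by
  obtain ⟨S', T', hSS', hTT', hcardS, hcardT, hcompat⟩ :=
    compatible_with_half_n_steiner_points_general S T (hS.trans hT.symm)
  exact ⟨S', T', hSS', hTT', by omega, by omega, hcompat⟩
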